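/- arXiv:1603.06229 — 2 statements merged into one kernel-verified Lean document; each statement's English description precedes it below -/
import Mathlib

section
/- Let M be a finite non-negative Borel measure on 𝕋 with M(X) ≥ m(X) for all Borel sets X ⊆ 𝕋, let t_n = ∫_𝕋 z^{−n} dM(z) for n ∈ ℤ, and let 𝒟_* = { u ∈ L²(𝕋, M) : the sequence (∫_𝕋 u(z) z^{−n} dM(z))_{n ≥ 0} belongs to ℓ²(ℤ₊) }. Then the Toeplitz quadratic form t[g,g] is closable in ℓ²(ℤ₊) if and only if 𝒟_* is dense in L²(𝕋, M). -/
/-!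
Let `e n ∈ L²(M)` be the class of `z ↦ z ^ n` and `A g = ∑ g n • e n` on finitely supported `g`.
Since `⟪e n, e m⟫ = t (n - m)`, one has `t[g,g] = ‖A g‖²`, so closability of the form is
closability of the operator `A : 𝒟 ⊆ ℓ² → L²(M)`. Moreover `⟪e n, u⟫ = ∫ u z⁻ⁿ dM`, so `𝒟_*` is the
domain of the adjoint of `A`. The theorem is therefore von Neumann's criterion: an operator between
Hilbert spaces is closable if and only if its adjoint is densely defined
(`closable_iff_dense_adjointDomain`). The nontrivial direction takes `f` orthogonal to the adjoint
domain and observes that `(0, f)` lies in the double orthogonal complement of the graph of `A`,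
hence in its closure, which forces `f = 0`.
-/


open MeasureTheory Filter Finset ComplexConjugate
open scoped ComplexOrder

noncomputable section

instance : MeasurableSpace Circle := borel Circle
instance : BorelSpace Circle := ⟨rfl⟩

/-- The normalized Lebesgue (Haar) probability measure `m` on the unit circle `𝕋 = Circle`. -/
def haarT : Measure Circle :=
  (ENNReal.ofReal (2 * Real.pi))⁻¹ •
    (volume.restrict (Set.Ioc 0 (2 * Real.pi))).map Circle.exp

/-- The Toeplitz quadratic form `t[g,g] = Σ_{n,m ≥ 0} t_{n-m} g_m conj (g_n)` on the set `𝒟`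
of finitely supported sequences `g : ℕ → ℂ`. -/
def toeplitzForm (t : ℤ → ℂ) (g : ℕ →₀ ℂ) : ℂ :=
  ∑ n ∈ g.support, ∑ m ∈ g.support, t ((n : ℤ) - (m : ℤ)) * g m * conj (g n)

/-- The `ℓ²(ℤ₊)` norm of a finitely supported sequence. -/
def l2norm (g : ℕ →₀ ℂ) : ℝ := Real.sqrt (∑ n ∈ g.support, ‖g n‖ ^ 2)

/-- A quadratic form `Q` on the finitely supported sequences is closable in `ℓ²(ℤ₊)` if for every
sequence `g⁽ᵏ⁾` in `𝒟` with `‖g⁽ᵏ⁾‖ → 0` and `Q[g⁽ᵏ⁾ - g⁽ˡ⁾] → 0` as `k, l → ∞` one has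
`Q[g⁽ᵏ⁾] → 0`. -/
def FormClosable (Q : (ℕ →₀ ℂ) → ℂ) : Prop :=
  ∀ g : ℕ → (ℕ →₀ ℂ),
    Tendsto (fun k => l2norm (g k)) atTop (nhds 0) →
    Tendsto (fun p : ℕ × ℕ => Q (g p.1 - g p.2)) atTop (nhds 0) →
    Tendsto (fun k => Q (g k)) atTop (nhds 0)

section Abstract

variable {V H K : Type*} [AddCommGroup V] [Module ℂ V]
  [NormedAddCommGroup H] [InnerProductSpace ℂ H]
  [NormedAddCommGroup K] [InnerProductSpace ℂ K]

/-- The domain of the adjoint of the (possibly multivalued) operator `J v ↦ A v` from `H` to `K`: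
all `u` for which `⟪A v, u⟫` is represented as `⟪J v, a⟫` for some `a : H`. -/
def adjointDomain (J : V →ₗ[ℂ] H) (A : V →ₗ[ℂ] K) : Submodule ℂ K where
  carrier := {u | ∃ a : H, ∀ v, inner ℂ (A v) u = inner ℂ (J v) a}
  add_mem' := by
    rintro u u' ⟨a, ha⟩ ⟨a', ha'⟩
    exact ⟨a + a', fun v => by rw [inner_add_right, inner_add_right, ha, ha']⟩
  zero_mem' := ⟨0, fun v => by simp⟩
  smul_mem' := by
    rintro c u ⟨a, ha⟩
    exact ⟨c • a, fun v => by rw [inner_smul_right, inner_smul_right, ha]⟩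

/-- The graph of `J v ↦ A v` in the Hilbert sum of `H` and `K`. -/
def operatorGraph (J : V →ₗ[ℂ] H) (A : V →ₗ[ℂ] K) : Submodule ℂ (WithLp 2 (H × K)) :=
  LinearMap.range ((WithLp.linearEquiv 2 ℂ (H × K)).symm.toLinearMap ∘ₗ J.prod A)

/-- A vector orthogonal to the adjoint domain is, paired with `0`, a limit of points of the
graph. -/
lemma exists_seq_of_mem_orthogonal [CompleteSpace H] [CompleteSpace K]
    (J : V →ₗ[ℂ] H) (A : V →ₗ[ℂ] K) {f : K} (hf : f ∈ (adjointDomain J A)ᗮ) :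
    ∃ g : ℕ → V, Tendsto (fun k => J (g k)) atTop (nhds 0) ∧
      Tendsto (fun k => A (g k)) atTop (nhds f) := by
  have hmem : WithLp.toLp 2 ((0 : H), f) ∈ (operatorGraph J A).topologicalClosure := by
    rw [← Submodule.orthogonal_orthogonal_eq_closure, Submodule.mem_orthogonal]
    intro w hw
    have hu : w.snd ∈ adjointDomain J A := by
      refine ⟨-w.fst, fun v => ?_⟩
      have := (Submodule.mem_orthogonal _ _).1 hw _ ⟨v, rfl⟩
      rw [WithLp.prod_inner_apply] at this
      rw [inner_neg_right]
      exact eq_neg_of_add_eq_zero_right this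
    have h0 := (Submodule.mem_orthogonal _ _).1 hf _ hu
    rw [WithLp.prod_inner_apply]
    simpa using h0
  obtain ⟨x, hx, hlim⟩ := mem_closure_iff_seq_limit.1 hmem
  choose g hg using hx
  have h2 : Tendsto (fun k => WithLp.ofLp (x k)) atTop (nhds ((0 : H), f)) :=
    ((WithLp.prod_continuous_ofLp 2 H K).tendsto _).comp hlim
  have hx' : ∀ k, WithLp.ofLp (x k) = (J (g k), A (g k)) := fun k => by
    rw [← hg k]; rfl
  simp only [hx'] at h2
  exact ⟨g, (continuous_fst.tendsto _).comp h2, (continuous_snd.tendsto _).comp h2⟩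

/-- Von Neumann's criterion: an operator is closable if and only if its adjoint is densely
defined. -/
lemma closable_iff_dense_adjointDomain [CompleteSpace H] [CompleteSpace K]
    (J : V →ₗ[ℂ] H) (A : V →ₗ[ℂ] K) :
    (∀ g : ℕ → V, Tendsto (fun k => J (g k)) atTop (nhds 0) →
      CauchySeq (fun k => A (g k)) → Tendsto (fun k => A (g k)) atTop (nhds 0)) ↔
    Dense (adjointDomain J A : Set K) := by
  constructor
  · intro h
    rw [Submodule.dense_iff_topologicalClosure_eq_top,
      Submodule.topologicalClosure_eq_top_iff, Submodule.eq_bot_iff]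
    intro f hf
    obtain ⟨g, hJ, hA⟩ := exists_seq_of_mem_orthogonal J A hf
    exact tendsto_nhds_unique hA (h g hJ hA.cauchySeq)
  · intro hd g hJ hA
    obtain ⟨f, hf⟩ := cauchySeq_tendsto_of_complete hA
    have hf0 : f = 0 := by
      refine hd.eq_zero_of_inner_left ℂ ?_
      rintro u ⟨a, ha⟩
      have h1 : Tendsto (fun k => inner ℂ (A (g k)) u) atTop (nhds (inner ℂ f u)) :=
        hf.inner tendsto_const_nhds
      have h2 : Tendsto (fun k => inner ℂ (A (g k)) u) atTop (nhds (inner ℂ (0 : H) a)) := by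
        simp only [ha]
        exact hJ.inner tendsto_const_nhds
      rw [tendsto_nhds_unique h1 h2, inner_zero_left]
    rwa [hf0] at hf

end Abstract

/-- The inclusion of finitely supported sequences into `ℓ²(ℤ₊)`. -/
def finsuppToL2 : (ℕ →₀ ℂ) →ₗ[ℂ] lp (fun _ : ℕ => ℂ) 2 :=
  Finsupp.linearCombination ℂ (fun n => lp.single 2 n (1 : ℂ))

lemma finsuppToL2_single_inner (n : ℕ) (a : lp (fun _ : ℕ => ℂ) 2) :
    inner ℂ (finsuppToL2 (Finsupp.single n 1)) a = a n := by
  simp [finsuppToL2, lp.inner_single_left]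

lemma finsuppToL2_apply (g : ℕ →₀ ℂ) (n : ℕ) : finsuppToL2 g n = g n := by
  have h : finsuppToL2 g = ∑ i ∈ g.support, lp.single 2 i (g i) := by
    rw [finsuppToL2, Finsupp.linearCombination_apply, Finsupp.sum]
    refine Finset.sum_congr rfl fun i _ => ?_
    rw [← lp.single_smul]; simp
  rw [h, lp.coeFn_sum, Finset.sum_apply]
  simp only [lp.coeFn_single]
  rw [Finset.sum_pi_single]
  by_cases hn : n ∈ g.support
  · simp [hn]
  · simp [hn, Finsupp.notMem_support_iff.1 hn]

lemma norm_finsuppToL2 (g : ℕ →₀ ℂ) : ‖finsuppToL2 g‖ = l2norm g := by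
  rw [l2norm, eq_comm, Real.sqrt_eq_iff_mul_self_eq (by positivity) (norm_nonneg _), ← sq]
  have h := lp.norm_rpow_eq_tsum (p := 2) (by norm_num) (finsuppToL2 g)
  simp only [ENNReal.toReal_ofNat, Real.rpow_two, finsuppToL2_apply] at h
  rw [h]
  refine (tsum_eq_sum (s := g.support) fun n hn => ?_).symm
  simp [Finsupp.notMem_support_iff.1 hn]

section Circle

variable (M : Measure Circle) [IsFiniteMeasure M]

lemma memLp_monomial (n : ℕ) : MemLp (fun z : Circle => (z : ℂ) ^ n) 2 M :=
  MemLp.of_bound (by fun_prop) 1 (Eventually.of_forall fun z => by simp [Circle.norm_coe])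

/-- The class of `z ↦ z ^ n` in `L²(𝕋, M)`. -/
def monomialLp (n : ℕ) : Lp ℂ 2 M := (memLp_monomial M n).toLp _

lemma inner_monomialLp (n : ℕ) (u : Lp ℂ 2 M) :
    inner ℂ (monomialLp M n) u = ∫ z, u z * (z : ℂ) ^ (-(n : ℤ)) ∂M := by
  rw [L2.inner_def]
  refine integral_congr_ae ?_
  filter_upwards [(memLp_monomial M n).coeFn_toLp] with z hz
  rw [monomialLp, hz, RCLike.inner_apply, map_pow, ← Circle.coe_inv_eq_conj, zpow_neg,
    zpow_natCast, Circle.coe_inv, inv_pow]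

lemma inner_monomialLp_monomialLp (n m : ℕ) :
    inner ℂ (monomialLp M n) (monomialLp M m) = ∫ z, (z : ℂ) ^ (-((n : ℤ) - m)) ∂M := by
  rw [inner_monomialLp]
  refine integral_congr_ae ?_
  filter_upwards [(memLp_monomial M m).coeFn_toLp] with z hz
  rw [monomialLp, hz, neg_sub, sub_eq_add_neg, zpow_add₀ (Circle.coe_ne_zero z), zpow_natCast]

/-- The operator sending a finitely supported sequence `g` to the polynomial `∑ g n z ^ n` in
`L²(𝕋, M)`. -/
def polyLp : (ℕ →₀ ℂ) →ₗ[ℂ] Lp ℂ 2 M := Finsupp.linearCombination ℂ (monomialLp M)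

lemma toeplitzForm_eq (t : ℤ → ℂ) (hmom : ∀ n : ℤ, t n = ∫ z, (z : ℂ) ^ (-n) ∂M) (g : ℕ →₀ ℂ) :
    toeplitzForm t g = ((‖polyLp M g‖ ^ 2 : ℝ) : ℂ) := by
  have h := inner_self_eq_norm_sq_to_K (𝕜 := ℂ) (polyLp M g)
  push_cast
  refine Eq.trans ?_ h
  rw [polyLp, Finsupp.linearCombination_apply, Finsupp.sum, sum_inner, toeplitzForm]
  refine Finset.sum_congr rfl fun n _ => ?_
  rw [inner_sum]
  refine Finset.sum_congr rfl fun m _ => ?_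
  rw [inner_smul_left, inner_smul_right, inner_monomialLp_monomialLp, ← hmom]
  ring

/-- The set `𝒟_*` is the adjoint domain of the polynomial operator. -/
lemma adjointDomain_eq :
    (adjointDomain finsuppToL2 (polyLp M) : Set (Lp ℂ 2 M)) =
      {u : Lp ℂ 2 M | Memℓp (fun n : ℕ => ∫ z, u z * (z : ℂ) ^ (-(n : ℤ)) ∂M) 2} := by
  have hA : ∀ n, polyLp M (Finsupp.single n 1) = monomialLp M n := fun n => by simp [polyLp]
  ext u
  constructor
  · rintro ⟨a, ha⟩
    have : (fun n : ℕ => ∫ z, u z * (z : ℂ) ^ (-(n : ℤ)) ∂M) = a := by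
      funext n
      rw [← inner_monomialLp, ← hA, ha, finsuppToL2_single_inner]
    rw [Set.mem_ofPred_eq, this]
    exact lp.memℓp a
  · intro hu
    refine ⟨⟨_, hu⟩, fun g => ?_⟩
    induction g using Finsupp.induction_linear with
    | zero => simp
    | add f g hf hg => rw [map_add, map_add, inner_add_left, inner_add_left, hf, hg]
    | single n c =>
      have hc : Finsupp.single n c = c • Finsupp.single n (1 : ℂ) := by simp
      rw [hc, map_smul, map_smul, inner_smul_left, inner_smul_left, hA, finsuppToL2_single_inner,
        inner_monomialLp]

lemma formClosable_iff (t : ℤ → ℂ) (hmom : ∀ n : ℤ, t n = ∫ z, (z : ℂ) ^ (-n) ∂M) :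
    FormClosable (toeplitzForm t) ↔
    ∀ g : ℕ → (ℕ →₀ ℂ), Tendsto (fun k => finsuppToL2 (g k)) atTop (nhds 0) →
      CauchySeq (fun k => polyLp M (g k)) → Tendsto (fun k => polyLp M (g k)) atTop (nhds 0) := by
  have key : ∀ {α : Type} (l : Filter α) (x : α → Lp ℂ 2 M),
      Tendsto (fun i => ((‖x i‖ ^ 2 : ℝ) : ℂ)) l (nhds 0) ↔ Tendsto (fun i => ‖x i‖) l (nhds 0) := by
    intro α l x
    rw [← Complex.ofReal_zero, Filter.tendsto_ofReal_iff]
    constructor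
    · intro h
      simpa [Real.sqrt_sq (norm_nonneg _)] using h.sqrt
    · intro h
      simpa using h.pow 2
  refine forall_congr' fun g => ?_
  simp only [toeplitzForm_eq M t hmom, key, ← norm_finsuppToL2]
  simp only [← tendsto_zero_iff_norm_tendsto_zero, cauchySeq_iff_tendsto_dist_atTop_0, map_sub,
    dist_eq_norm]

end Circle

/-- The Toeplitz quadratic form is closable in `ℓ²(ℤ₊)` if and only if the set
`𝒟_* = {u ∈ L²(𝕋, M) : (∫ u(z) z⁻ⁿ dM)_{n ≥ 0} ∈ ℓ²(ℤ₊)}` is dense in `L²(𝕋, M)`. -/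
theorem toeplitzForm_closable_iff_dense
    (M : Measure Circle) [IsFiniteMeasure M]
    (hM : ∀ X : Set Circle, MeasurableSet X → haarT X ≤ M X)
    (t : ℤ → ℂ) (hmom : ∀ n : ℤ, t n = ∫ z, (z : ℂ) ^ (-n) ∂M) :
    FormClosable (toeplitzForm t) ↔
      Dense {u : Lp ℂ 2 M |
        Memℓp (fun n : ℕ => ∫ z, u z * (z : ℂ) ^ (-(n : ℤ)) ∂M) 2} := by
  rw [formClosable_iff M t hmom, closable_iff_dense_adjointDomain, adjointDomain_eq]
end
end

section
/- (Generalized F. and M. Riesz theorem.) Let μ be a finite complex Borel measure on the unit circle 𝕋 and set μ̂(n) = ∫_𝕋 z^{−n} dμ(z) for n ∈ ℤ. If Σ_{n ≥ 0} |μ̂(n)|² < ∞, then μ is absolutely continuous with respect to the normalized Lebesgue measure m on 𝕋. -/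
/-!
Let `K ⊆ 𝕋` be closed with `m(K) = 0`. There are analytic polynomials `P` that are uniformly
bounded, close to `1` on `K`, and small in `L²(m)` (`exists_peak_poly`): choose a polynomial `p`,
real at `0`, whose real part is nonnegative on `𝕋`, large on `K` and of small mean, and
approximate `1 - exp (-p)`.

For a trigonometric polynomial `h`, the integral `∫ h · conj P dμ` involves only the coefficients
`μ̂(n)` with `n` bounded below, so square-summability and the Cauchy–Schwarz inequality bound it by
`C_h ‖P‖_{L²(m)}` (`exists_bound_cmInt`). Approximating `1_K` by such `h` in `L¹(|μ|)` shows that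
`∫_K conj P dμ` is small; as `conj P` is close to `1` on `K`, it follows that `μ(K) = 0`
(`apply_eq_zero_of_isClosed`). Inner regularity extends this to all Borel null sets.
-/

open MeasureTheory Filter Finset ComplexConjugate
open scoped ComplexOrder

noncomputable section

/-- The Fourier coefficient `μ̂(n) = ∫_𝕋 z⁻ⁿ dμ(z)` of a finite complex Borel measure `μ` on `𝕋`,
the integral being taken via the Jordan decompositions of the real and imaginary parts of `μ`. -/
def cmFourierCoeff (μ : ComplexMeasure Circle) (n : ℤ) : ℂ :=
  (((∫ z, (z : ℂ) ^ (-n) ∂(ComplexMeasure.re μ).toJordanDecomposition.posPart) -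
      ∫ z, (z : ℂ) ^ (-n) ∂(ComplexMeasure.re μ).toJordanDecomposition.negPart) +
    Complex.I *
      ((∫ z, (z : ℂ) ^ (-n) ∂(ComplexMeasure.im μ).toJordanDecomposition.posPart) -
        ∫ z, (z : ℂ) ^ (-n) ∂(ComplexMeasure.im μ).toJordanDecomposition.negPart))

open Polynomial

/-! ### Integration over the circle -/

lemma integral_haarT (g : ℂ → ℂ) (hg : Continuous fun z : Circle => g z) :
    ∫ z : Circle, g z ∂haarT = Real.circleAverage g 0 1 := by
  rw [haarT, integral_smul_measure, integral_map (by fun_prop) hg.aestronglyMeasurable,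
    Real.circleAverage_def, intervalIntegral.integral_of_le Real.two_pi_pos.le]
  congr 1
  · rw [ENNReal.toReal_inv, ENNReal.toReal_ofReal Real.two_pi_pos.le]
  · simp [circleMap]

instance isProbabilityMeasure_haarT : IsProbabilityMeasure haarT := by
  constructor
  have h2 : ENNReal.ofReal (2 * Real.pi) ≠ 0 := by simp [Real.pi_pos]
  rw [haarT, Measure.smul_apply, Measure.map_apply (by fun_prop) MeasurableSet.univ]
  simp only [Set.preimage_univ, Measure.restrict_apply_univ, Real.volume_Ioc, sub_zero, smul_eq_mul]
  exact ENNReal.inv_mul_cancel h2 ENNReal.ofReal_ne_top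

lemma Circle.integrable_of_continuous (ν : Measure Circle) [IsFiniteMeasure ν]
    {E : Type*} [NormedAddCommGroup E] {f : Circle → E} (hf : Continuous f) :
    Integrable f ν :=
  hf.integrable_of_hasCompactSupport (HasCompactSupport.of_compactSpace f)

lemma Circle.continuous_coe_zpow (n : ℤ) : Continuous fun z : Circle => (z : ℂ) ^ n :=
  Continuous.zpow₀ continuous_subtype_val n fun z : Circle => .inl z.coe_ne_zero

/-- The mean value property at the origin. -/
lemma integral_haarT_entire {g : ℂ → ℂ} (hg : Differentiable ℂ g) :
    ∫ z : Circle, g z ∂haarT = g 0 := by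
  rw [integral_haarT g (hg.continuous.comp continuous_subtype_val)]
  exact hg.diffContOnCl.circleAverage

lemma integral_haarT_zpow (n : ℤ) :
    ∫ z : Circle, (z : ℂ) ^ n ∂haarT = if n = 0 then 1 else 0 := by
  obtain ⟨k, rfl | rfl⟩ := n.eq_nat_or_neg
  · have := integral_haarT_entire (g := fun z => z ^ k) (by fun_prop)
    simp only [zpow_natCast, this, Nat.cast_eq_zero]
    simp [zero_pow_eq]
  · have := integral_haarT_entire (g := fun z => z ^ k) (by fun_prop)
    have h2 : ∀ z : Circle, (z : ℂ) ^ (-(k : ℤ)) = conj ((z : ℂ) ^ k) := fun z => by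
      rw [zpow_neg, zpow_natCast, map_pow, ← inv_pow, ← Circle.coe_inv, Circle.coe_inv_eq_conj]
    simp only [h2]
    rw [integral_conj, this]
    by_cases hk : k = 0 <;> simp [hk]

/-- Parseval's identity for analytic polynomials on the circle. -/
lemma integral_normSq_eval (p : ℂ[X]) :
    ∫ z : Circle, ‖p.eval (z : ℂ)‖ ^ 2 ∂haarT = ∑ n ∈ range (p.natDegree + 1), ‖p.coeff n‖ ^ 2 := by
  rw [← Complex.ofReal_inj, ← integral_complex_ofReal]
  have h (z : Circle) : ((‖p.eval (z : ℂ)‖ ^ 2 : ℝ) : ℂ) =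
      ∑ n ∈ range (p.natDegree + 1), ∑ k ∈ range (p.natDegree + 1),
        p.coeff n * conj (p.coeff k) * (z : ℂ) ^ ((n : ℤ) - k) := by
    rw [Complex.ofReal_pow, ← Complex.mul_conj', eval_eq_sum_range, map_sum, sum_mul_sum]
    refine sum_congr rfl fun n _ => sum_congr rfl fun k _ => ?_
    rw [zpow_sub₀ z.coe_ne_zero, zpow_natCast, zpow_natCast, map_mul, map_pow,
      ← Circle.coe_inv_eq_conj, Circle.coe_inv, inv_pow]
    ring
  have hc (n k : ℕ) : Continuous fun z : Circle =>
      p.coeff n * conj (p.coeff k) * (z : ℂ) ^ ((n : ℤ) - k) :=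
    continuous_const.mul (Circle.continuous_coe_zpow _)
  simp_rw [h]
  rw [integral_finsetSum _ fun n _ => Circle.integrable_of_continuous _
    (continuous_finsetSum _ fun k _ => hc n k), Complex.ofReal_sum]
  refine sum_congr rfl fun n hn => ?_
  rw [integral_finsetSum _ fun k _ => Circle.integrable_of_continuous _ (hc n k)]
  simp_rw [integral_const_mul, integral_haarT_zpow, sub_eq_zero, Nat.cast_inj]
  simp only [mul_ite, mul_one, mul_zero, sum_ite_eq, hn, if_true]
  rw [Complex.mul_conj', Complex.ofReal_pow]

/-! ### Uniform approximation by polynomials -/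

/-- The character `z ↦ zⁿ` of the circle as a continuous function. -/
def charT (n : ℤ) : C(Circle, ℂ) :=
  ⟨fun z => (z : ℂ) ^ n, Circle.continuous_coe_zpow n⟩

lemma exists_trigPoly_near (f : C(Circle, ℂ)) {ε : ℝ} (hε : 0 < ε) :
    ∃ h ∈ Submodule.span ℂ (Set.range charT), ∀ z, ‖f z - h z‖ < ε := by
  have : Fact (0 < 2 * Real.pi) := ⟨Real.two_pi_pos⟩
  let e := AddCircle.homeomorphCircle (T := 2 * Real.pi) Real.two_pi_pos.ne'
  let e' : C(Circle, AddCircle (2 * Real.pi)) := ⟨e.symm, e.symm.continuous⟩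
  let g : C(AddCircle (2 * Real.pi), ℂ) := f.comp ⟨e, e.continuous⟩
  have hg : g ∈ (Submodule.span ℂ (Set.range (@fourier (2 * Real.pi)))).topologicalClosure := by
    rw [span_fourier_closure_eq_top]; trivial
  obtain ⟨k, hk, hgk⟩ := Metric.mem_closure_iff.1 hg ε hε
  refine ⟨k.comp e', ?_, fun z => ?_⟩
  · refine Submodule.span_induction (p := fun k _ => k.comp e' ∈ Submodule.span ℂ (Set.range charT))
      ?_ ?_ ?_ ?_ hk
    · rintro _ ⟨n, rfl⟩
      refine Submodule.subset_span ⟨n, ?_⟩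
      ext z
      have hz : AddCircle.toCircle (e.symm z) = z := by
        rw [← AddCircle.homeomorphCircle_apply Real.two_pi_pos.ne']
        exact e.apply_symm_apply z
      simp only [ContinuousMap.comp_apply, fourier_apply, AddCircle.toCircle_zsmul]
      rw [show e' z = e.symm z from rfl, hz]
      simp only [charT, ContinuousMap.coe_mk, Circle.coe_zpow]
    · exact Submodule.zero_mem _
    · intro x y _ _ hx hy
      exact Submodule.add_mem _ hx hy
    · intro c x _ hx
      exact Submodule.smul_mem _ c hx
  · have := (ContinuousMap.dist_apply_le_dist (f := g) (g := k) (e.symm z)).trans_lt hgk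
    rw [dist_eq_norm] at this
    simpa [g, e'] using this

/-- On the circle every trigonometric polynomial is the sum of an analytic and an
anti-analytic polynomial. -/
lemma exists_analytic_add_conj {h : C(Circle, ℂ)}
    (hh : h ∈ Submodule.span ℂ (Set.range charT)) :
    ∃ p q : ℂ[X], ∀ z : Circle, h z = p.eval (z : ℂ) + conj (q.eval (z : ℂ)) := by
  induction hh using Submodule.span_induction with
  | mem x hx =>
    obtain ⟨n, rfl⟩ := hx
    obtain ⟨k, rfl | rfl⟩ := n.eq_nat_or_neg
    · exact ⟨X ^ k, 0, fun z => by simp [charT]⟩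
    · refine ⟨0, X ^ k, fun z => ?_⟩
      simp [charT, ← Circle.coe_inv_eq_conj]
  | zero => exact ⟨0, 0, fun z => by simp⟩
  | add x y _ _ hx hy =>
    obtain ⟨p, q, h1⟩ := hx
    obtain ⟨p', q', h2⟩ := hy
    refine ⟨p + p', q + q', fun z => ?_⟩
    simp [h1, h2]; ring
  | smul c x _ hx =>
    obtain ⟨p, q, h1⟩ := hx
    refine ⟨C c * p, C (conj c) * q, fun z => ?_⟩
    simp [h1]; ring

/-- Every real trigonometric polynomial is the real part of an analytic polynomial that is
real at the origin, so the latter approximate every continuous real function uniformly. -/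
lemma exists_poly_re_near (v : C(Circle, ℝ)) {ε : ℝ} (hε : 0 < ε) :
    ∃ p : ℂ[X], (p.eval 0).im = 0 ∧ ∀ z : Circle, |v z - (p.eval (z : ℂ)).re| < ε := by
  obtain ⟨h, hh, hvh⟩ := exists_trigPoly_near
    ⟨fun z => (v z : ℂ), Complex.continuous_ofReal.comp v.continuous⟩ hε
  obtain ⟨p, q, hpq⟩ := exists_analytic_add_conj hh
  refine ⟨p + q - C (((p + q).eval 0).im * Complex.I), by simp, fun z => ?_⟩
  have := (Complex.abs_re_le_norm _).trans_lt (hvh z)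
  simpa [hpq] using this

lemma exists_exp_poly_near (p : ℂ[X]) {ε : ℝ} (hε : 0 < ε) :
    ∃ q : ℂ[X], ∀ z : Circle, ‖Complex.exp (p.eval (z : ℂ)) - q.eval (z : ℂ)‖ < ε := by
  have hc : Continuous fun z : Circle => p.eval (z : ℂ) := p.continuous.comp continuous_subtype_val
  obtain ⟨R, hR⟩ := (isCompact_range hc).isBounded.exists_norm_le
  have hR' (z : Circle) : ‖p.eval (z : ℂ)‖ ≤ R := hR _ ⟨z, rfl⟩
  have h1 := (FloorSemiring.tendsto_pow_div_factorial_atTop R).mul_const 2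
  rw [zero_mul] at h1
  obtain ⟨n, hn, hn2⟩ := ((h1.eventually_lt_const hε).and
    (eventually_ge_atTop ⌈2 * R⌉₊)).exists
  refine ⟨∑ m ∈ range n, C ((m.factorial : ℂ)⁻¹) * p ^ m, fun z => ?_⟩
  have hb : ‖p.eval (z : ℂ)‖ / n.succ ≤ 1 / 2 := by
    have : 2 * R ≤ n := (Nat.le_ceil _).trans (by exact_mod_cast hn2)
    rw [div_le_div_iff₀ (by positivity) (by norm_num)]
    push_cast
    linarith [hR' z]
  have := Complex.exp_bound' hb
  have he : (∑ m ∈ range n, C ((m.factorial : ℂ)⁻¹) * p ^ m).eval (z : ℂ) =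
      ∑ m ∈ range n, p.eval (z : ℂ) ^ m / m.factorial := by
    simp [eval_finsetSum, div_eq_inv_mul]
  rw [he]
  refine this.trans_lt (lt_of_le_of_lt ?_ hn)
  gcongr
  exact hR' z

/-! ### Polynomials peaking on a null set -/

/-- A cutoff function for a closed set, as thin as desired for a given finite measure. -/
lemma exists_cutoff {K : Set Circle} (hK : IsClosed K) (ν : Measure Circle) [IsFiniteMeasure ν]
    {ε : ℝ} (hε : 0 < ε) :
    ∃ v : C(Circle, ℝ), (∀ z, v z ∈ Set.Icc (0 : ℝ) 1) ∧ (∀ z ∈ K, v z = 1) ∧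
      ∫ z, v z ∂ν ≤ ν.real K + ε := by
  obtain ⟨U, hKU, hU, hlt⟩ := K.exists_isOpen_lt_add (measure_ne_top ν K)
    (ε := ENNReal.ofReal ε) (by simpa using hε)
  obtain ⟨v, h0, h1, h01⟩ := exists_continuous_zero_one_of_isClosed hU.isClosed_compl hK
    (Set.disjoint_left.2 fun z hz hzK => hz (hKU hzK))
  refine ⟨v, h01, fun z hz => h1 hz, ?_⟩
  calc ∫ z, v z ∂ν ≤ ∫ z, U.indicator (fun _ => (1 : ℝ)) z ∂ν := by
        refine integral_mono (Circle.integrable_of_continuous _ v.continuous)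
          ((integrable_const _).indicator hU.measurableSet) fun z => ?_
        by_cases hz : z ∈ U
        · simpa [hz] using (h01 z).2
        · simpa [hz] using (h0 hz).le
    _ = ν.real U := by rw [integral_indicator_const _ hU.measurableSet]; simp
    _ ≤ ν.real K + ε := by
        have := ENNReal.toReal_mono (by finiteness) hlt.le
        rwa [ENNReal.toReal_add (by finiteness) (by finiteness), ENNReal.toReal_ofReal hε.le] at this

lemma Circle.continuous_eval (p : ℂ[X]) : Continuous fun z : Circle => p.eval (z : ℂ) :=
  p.continuous.comp continuous_subtype_val

/-- Let `K` be closed and Lebesgue-null. With `w = Re p ≥ 0` a trigonometric polynomial that is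
large on `K` and has small mean, the function `1 - exp (-p)` is bounded by `2`, close to `1` on
`K`, and `∫ |1 - exp (-p)|² ≤ 2 - 2 Re ∫ exp (-p) = 2 - 2 exp (-∫ w)` is small by the mean value
property. The polynomial found here is a Taylor approximation of that function. -/
lemma exists_peak_poly {K : Set Circle} (hK : IsClosed K) (hK0 : haarT K = 0)
    {δ : ℝ} (hδ : 0 < δ) (hδ1 : δ < 1) :
    ∃ P : ℂ[X], (∀ z : Circle, ‖P.eval (z : ℂ)‖ ≤ 3) ∧
      (∀ z ∈ K, ‖1 - P.eval (z : ℂ)‖ ≤ δ) ∧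
      ∫ z : Circle, ‖P.eval (z : ℂ)‖ ^ 2 ∂haarT ≤ δ := by
  -- `N` is the size of `Re p` on `K`, and `3 * η` bounds its mean.
  set N : ℝ := -Real.log (δ / 2) with hN
  have hNpos : 0 < N := by
    have := Real.log_neg (x := δ / 2) (by linarith) (by linarith)
    linarith
  have hexpN : Real.exp (-N) = δ / 2 := by rw [hN, neg_neg, Real.exp_log (by linarith)]
  set η : ℝ := δ / 24 with hη
  have hηpos : 0 < η := by positivity
  obtain ⟨v, hv01, hvK, hvint⟩ := exists_cutoff hK haarT (ε := η / N) (by positivity)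
  have hr0 : haarT.real K = 0 := by simp [Measure.real, hK0]
  rw [hr0, zero_add] at hvint
  obtain ⟨p, hp0, hpv⟩ := exists_poly_re_near (N • v + ContinuousMap.const _ η) hηpos
  simp only [ContinuousMap.add_apply, ContinuousMap.smul_apply, ContinuousMap.const_apply,
    smul_eq_mul, abs_lt] at hpv
  obtain ⟨q, hq⟩ := exists_exp_poly_near (-p) (half_pos hδ)
  have hcp := Circle.continuous_eval p
  have hcE : Continuous fun z : Circle => Complex.exp (-p.eval (z : ℂ)) := by fun_prop
  simp only [eval_neg] at hq
  have hw (z : Circle) : N * v z ≤ (p.eval (z : ℂ)).re := by linarith [(hpv z).2]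
  have hw0 (z : Circle) : 0 ≤ (p.eval (z : ℂ)).re :=
    (mul_nonneg hNpos.le (hv01 z).1).trans (hw z)
  have hE (z : Circle) : ‖Complex.exp (-p.eval (z : ℂ))‖ ≤ 1 := by
    rw [Complex.norm_exp, Real.exp_le_one_iff]
    simpa using hw0 z
  have hG (z : Circle) : ‖(1 - q).eval (z : ℂ)‖ ≤
      ‖1 - Complex.exp (-p.eval (z : ℂ))‖ + δ / 2 := by
    have : (1 - q).eval (z : ℂ) = (1 - Complex.exp (-p.eval (z : ℂ))) +
      (Complex.exp (-p.eval (z : ℂ)) - q.eval (z : ℂ)) := by simp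
    rw [this]
    exact (norm_add_le _ _).trans (by gcongr; exact (hq z).le)
  refine ⟨1 - q, fun z => ?_, fun z hz => ?_, ?_⟩
  · have := norm_sub_le (1 : ℂ) (Complex.exp (-p.eval (z : ℂ)))
    rw [norm_one] at this
    linarith [hG z, hE z]
  · have h1 : ‖Complex.exp (-p.eval (z : ℂ))‖ ≤ δ / 2 := by
      rw [Complex.norm_exp, ← hexpN, Real.exp_le_exp, Complex.neg_re]
      have := hw z
      rw [hvK z hz] at this
      linarith
    have h2 := norm_sub_le (Complex.exp (-p.eval (z : ℂ)))
      (Complex.exp (-p.eval (z : ℂ)) - q.eval (z : ℂ))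
    simp only [eval_sub, eval_one, sub_sub_cancel] at h2 ⊢
    linarith [hq z]
  · have hmean : (p.eval 0).re ≤ 3 * η := by
      have h1 := integral_haarT_entire (g := fun z => p.eval z) p.differentiable
      have h2 : ∫ z : Circle, (p.eval (z : ℂ)).re ∂haarT = (p.eval 0).re := by
        rw [← h1]
        exact integral_re (Circle.integrable_of_continuous _ hcp)
      have h3 : ∫ z : Circle, (p.eval (z : ℂ)).re ∂haarT ≤
          ∫ z : Circle, (N * v z + 2 * η) ∂haarT := by
        refine integral_mono (Circle.integrable_of_continuous _ (by fun_prop))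
          (Circle.integrable_of_continuous _ (by fun_prop)) fun z => ?_
        show (p.eval (z : ℂ)).re ≤ N * v z + 2 * η
        linarith [(hpv z).1]
      rw [integral_add (Circle.integrable_of_continuous _ (by fun_prop)) (integrable_const _),
        integral_const_mul, integral_const] at h3
      simp only [probReal_univ, one_smul] at h3
      have h4 : N * ∫ z, v z ∂haarT ≤ η := by
        calc N * ∫ z, v z ∂haarT ≤ N * (η / N) := by gcongr
          _ = η := by field_simp
      linarith
    have hEint : (∫ z : Circle, (Complex.exp (-p.eval (z : ℂ))).re ∂haarT) =
        Real.exp (-(p.eval 0).re) := by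
      have h1 := integral_haarT_entire (g := fun z => Complex.exp (-p.eval z))
        (p.differentiable.neg.cexp)
      have h2 : ∫ z : Circle, (Complex.exp (-p.eval (z : ℂ))).re ∂haarT =
          (Complex.exp (-p.eval 0)).re := by
        rw [← h1]
        exact integral_re (Circle.integrable_of_continuous _ hcE)
      rw [h2, Complex.exp_re]
      simp [hp0]
    have hpt (z : Circle) : ‖(1 - q).eval (z : ℂ)‖ ^ 2 ≤
        (4 + δ / 2) - 4 * (Complex.exp (-p.eval (z : ℂ))).re := by
      have h1 : ‖1 - Complex.exp (-p.eval (z : ℂ))‖ ^ 2 ≤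
          2 - 2 * (Complex.exp (-p.eval (z : ℂ))).re := by
        have h3 : ‖Complex.exp (-p.eval (z : ℂ))‖ ^ 2 ≤ 1 :=
          pow_le_one₀ (norm_nonneg _) (hE z)
        rw [Complex.sq_norm, Complex.normSq_apply] at h3 ⊢
        simp only [Complex.sub_re, Complex.one_re, Complex.sub_im, Complex.one_im]
        nlinarith
      have h2 : ‖(1 - q).eval (z : ℂ)‖ ^ 2 ≤
          (‖1 - Complex.exp (-p.eval (z : ℂ))‖ + δ / 2) ^ 2 := by
        gcongr
        exact hG z
      nlinarith [sq_nonneg (‖1 - Complex.exp (-p.eval (z : ℂ))‖ - δ / 2)]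
    have hcq := Circle.continuous_eval (1 - q)
    have hint := integral_mono (μ := haarT)
      (Circle.integrable_of_continuous _ (by fun_prop))
      (Circle.integrable_of_continuous _ (by fun_prop)) hpt
    rw [integral_sub (integrable_const _) (Circle.integrable_of_continuous _ (by fun_prop)),
      integral_const_mul, hEint, integral_const] at hint
    simp only [probReal_univ, one_smul] at hint
    have := Real.add_one_le_exp (-(p.eval 0).re)
    linarith

/-! ### Integration against a complex measure -/

/-- The integral `∫ f dμ` against a complex measure, with the convention of `cmFourierCoeff`. -/
def cmInt (μ : ComplexMeasure Circle) (f : Circle → ℂ) : ℂ :=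
  (((∫ z, f z ∂(ComplexMeasure.re μ).toJordanDecomposition.posPart) -
      ∫ z, f z ∂(ComplexMeasure.re μ).toJordanDecomposition.negPart) +
    Complex.I *
      ((∫ z, f z ∂(ComplexMeasure.im μ).toJordanDecomposition.posPart) -
        ∫ z, f z ∂(ComplexMeasure.im μ).toJordanDecomposition.negPart))

/-- A finite positive measure dominating the complex measure `μ`: the sum of the total variations
of its real and imaginary parts. -/
def cmDom (μ : ComplexMeasure Circle) : Measure Circle :=
  ((ComplexMeasure.re μ).toJordanDecomposition.posPart +
      (ComplexMeasure.re μ).toJordanDecomposition.negPart) +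
    ((ComplexMeasure.im μ).toJordanDecomposition.posPart +
      (ComplexMeasure.im μ).toJordanDecomposition.negPart)

instance isFiniteMeasure_cmDom (μ : ComplexMeasure Circle) : IsFiniteMeasure (cmDom μ) := by
  unfold cmDom; infer_instance

lemma integrable_cmDom_iff {μ : ComplexMeasure Circle} {E : Type*} [NormedAddCommGroup E]
    {f : Circle → E} :
    Integrable f (cmDom μ) ↔
      (Integrable f (ComplexMeasure.re μ).toJordanDecomposition.posPart ∧
        Integrable f (ComplexMeasure.re μ).toJordanDecomposition.negPart) ∧
      (Integrable f (ComplexMeasure.im μ).toJordanDecomposition.posPart ∧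
        Integrable f (ComplexMeasure.im μ).toJordanDecomposition.negPart) := by
  simp only [cmDom, integrable_add_measure]

lemma cmInt_add {μ : ComplexMeasure Circle} {f g : Circle → ℂ} (hf : Integrable f (cmDom μ))
    (hg : Integrable g (cmDom μ)) : cmInt μ (fun z => f z + g z) = cmInt μ f + cmInt μ g := by
  obtain ⟨⟨f1, f2⟩, f3, f4⟩ := integrable_cmDom_iff.1 hf
  obtain ⟨⟨g1, g2⟩, g3, g4⟩ := integrable_cmDom_iff.1 hg
  simp only [cmInt]
  rw [integral_add f1 g1, integral_add f2 g2, integral_add f3 g3, integral_add f4 g4]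
  ring

lemma cmInt_const_mul (μ : ComplexMeasure Circle) (c : ℂ) (f : Circle → ℂ) :
    cmInt μ (fun z => c * f z) = c * cmInt μ f := by
  simp only [cmInt, integral_const_mul]
  ring

lemma cmInt_sum {μ : ComplexMeasure Circle} {ι : Type*} (s : Finset ι) {f : ι → Circle → ℂ}
    (hf : ∀ i, Integrable (f i) (cmDom μ)) :
    cmInt μ (fun z => ∑ i ∈ s, f i z) = ∑ i ∈ s, cmInt μ (f i) := by
  classical
  induction s using Finset.induction_on with
  | empty => simp [cmInt]
  | insert i s hi ih =>
    simp only [sum_insert hi]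
    rw [cmInt_add (hf i) (integrable_finsetSum _ fun j _ => hf j), ih]

lemma norm_cmInt_le {μ : ComplexMeasure Circle} {f : Circle → ℂ} (hf : Integrable f (cmDom μ)) :
    ‖cmInt μ f‖ ≤ ∫ z, ‖f z‖ ∂(cmDom μ) := by
  obtain ⟨⟨f1, f2⟩, f3, f4⟩ := integrable_cmDom_iff.1 hf.norm
  rw [cmDom, integral_add_measure (integrable_add_measure.2 ⟨f1, f2⟩)
    (integrable_add_measure.2 ⟨f3, f4⟩), integral_add_measure f1 f2, integral_add_measure f3 f4,
    cmInt]
  refine (norm_add_le _ _).trans (add_le_add ?_ ?_)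
  · exact (norm_sub_le _ _).trans
      (add_le_add (norm_integral_le_integral_norm _) (norm_integral_le_integral_norm _))
  · rw [norm_mul, Complex.norm_I, one_mul]
    exact (norm_sub_le _ _).trans
      (add_le_add (norm_integral_le_integral_norm _) (norm_integral_le_integral_norm _))

lemma cmInt_indicator (μ : ComplexMeasure Circle) {X : Set Circle} (hX : MeasurableSet X) :
    cmInt μ (X.indicator fun _ => 1) = μ X := by
  have key (s : SignedMeasure Circle) :
      ((s X : ℝ) : ℂ) = (∫ z, X.indicator (fun _ => (1 : ℂ)) z ∂s.toJordanDecomposition.posPart) -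
        ∫ z, X.indicator (fun _ => (1 : ℂ)) z ∂s.toJordanDecomposition.negPart := by
    rw [integral_indicator_const _ hX, integral_indicator_const _ hX]
    conv_lhs => rw [← s.toSignedMeasure_toJordanDecomposition]
    rw [JordanDecomposition.toSignedMeasure, Measure.toSignedMeasure_sub_apply hX]
    simp
  rw [cmInt, ← key, ← key, mul_comm]
  exact Complex.re_add_im (μ X)

/-! ### Vanishing on null sets -/

/-- Pairing with conjugates of analytic polynomials only sees the Fourier coefficients of `μ`
from some index on, so it is bounded in the norm of `L²(m)`. -/
lemma exists_bound_cmInt {μ : ComplexMeasure Circle}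
    (hμ : Summable fun n : ℕ => ‖cmFourierCoeff μ (n : ℤ)‖ ^ 2)
    {h : C(Circle, ℂ)} (hh : h ∈ Submodule.span ℂ (Set.range charT)) :
    ∃ M : ℝ, 0 ≤ M ∧ ∀ p : ℂ[X], ‖cmInt μ fun z => h z * conj (p.eval (z : ℂ))‖ ≤
      M * √(∫ z : Circle, ‖p.eval (z : ℂ)‖ ^ 2 ∂haarT) := by
  have hcp (p : ℂ[X]) : Continuous fun z : Circle => conj (p.eval (z : ℂ)) :=
    Complex.continuous_conj.comp (Circle.continuous_eval p)
  induction hh using Submodule.span_induction with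
  | mem x hx =>
    obtain ⟨j, rfl⟩ := hx
    have hs : Summable fun n : ℕ => ‖cmFourierCoeff μ ((n : ℤ) - j)‖ ^ 2 := by
      obtain ⟨k, rfl | rfl⟩ := j.eq_nat_or_neg
      · rw [← summable_nat_add_iff k]
        simpa using hμ
      · simpa using (summable_nat_add_iff k).2 hμ
    refine ⟨√(∑' n : ℕ, ‖cmFourierCoeff μ ((n : ℤ) - j)‖ ^ 2), Real.sqrt_nonneg _, fun p => ?_⟩
    have hexp : (fun z : Circle => charT j z * conj (p.eval (z : ℂ))) = fun z : Circle =>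
        ∑ n ∈ range (p.natDegree + 1), conj (p.coeff n) * (z : ℂ) ^ (-((n : ℤ) - j)) := by
      ext z
      rw [eval_eq_sum_range, map_sum, mul_sum]
      refine sum_congr rfl fun n _ => ?_
      rw [neg_sub, zpow_sub₀ z.coe_ne_zero, zpow_natCast, map_mul, map_pow,
        ← Circle.coe_inv_eq_conj, Circle.coe_inv, inv_pow]
      simp only [charT, ContinuousMap.coe_mk]
      ring
    have hcoef (n : ℕ) : cmInt μ (fun z : Circle => (z : ℂ) ^ (-((n : ℤ) - j))) =
        cmFourierCoeff μ ((n : ℤ) - j) := rfl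
    have hint (n : ℕ) : Integrable
        (fun z : Circle => conj (p.coeff n) * (z : ℂ) ^ (-((n : ℤ) - j))) (cmDom μ) :=
      Circle.integrable_of_continuous _ (continuous_const.mul (Circle.continuous_coe_zpow _))
    rw [hexp, cmInt_sum _ hint]
    simp only [cmInt_const_mul, hcoef]
    rw [integral_normSq_eval]
    calc ‖∑ n ∈ range (p.natDegree + 1), conj (p.coeff n) * cmFourierCoeff μ ((n : ℤ) - j)‖
        ≤ ∑ n ∈ range (p.natDegree + 1), ‖cmFourierCoeff μ ((n : ℤ) - j)‖ * ‖p.coeff n‖ := by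
          refine (norm_sum_le _ _).trans_eq (sum_congr rfl fun n _ => ?_)
          rw [norm_mul, RCLike.norm_conj, mul_comm]
      _ ≤ √(∑ n ∈ range (p.natDegree + 1), ‖cmFourierCoeff μ ((n : ℤ) - j)‖ ^ 2) *
          √(∑ n ∈ range (p.natDegree + 1), ‖p.coeff n‖ ^ 2) :=
          Real.sum_mul_le_sqrt_mul_sqrt _ _ _
      _ ≤ _ := by
          gcongr
          exact hs.sum_le_tsum _ fun n _ => by positivity
  | zero => exact ⟨0, le_rfl, fun p => by simp [cmInt]⟩
  | add x y _ _ hx hy =>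
    obtain ⟨M, hM, h1⟩ := hx
    obtain ⟨M', hM', h2⟩ := hy
    refine ⟨M + M', add_nonneg hM hM', fun p => ?_⟩
    simp only [ContinuousMap.add_apply, add_mul]
    have hint (x : C(Circle, ℂ)) :
        Integrable (fun z : Circle => x z * conj (p.eval (z : ℂ))) (cmDom μ) :=
      Circle.integrable_of_continuous _ (x.continuous.mul (hcp p))
    rw [cmInt_add (hint x) (hint y)]
    exact (norm_add_le _ _).trans (add_le_add (h1 p) (h2 p))
  | smul c x _ hx =>
    obtain ⟨M, hM, h1⟩ := hx
    refine ⟨‖c‖ * M, by positivity, fun p => ?_⟩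
    simp only [ContinuousMap.smul_apply, smul_eq_mul, mul_assoc]
    rw [cmInt_const_mul, norm_mul]
    gcongr
    exact h1 p

/-- Write `1_K = (1_K - h · conj P) + h · conj P`, with `h` a trigonometric polynomial close to
`1_K` in `L¹(|μ|)` and `P` peaking on `K`. The first term is small in `L¹(|μ|)`, and the second
has small integral by `exists_bound_cmInt`. -/
lemma apply_eq_zero_of_isClosed {μ : ComplexMeasure Circle}
    (hμ : Summable fun n : ℕ => ‖cmFourierCoeff μ (n : ℤ)‖ ^ 2)
    {K : Set Circle} (hK : IsClosed K) (hK0 : haarT K = 0) : μ K = 0 := by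
  set ν := cmDom μ with hν
  suffices H : ∀ ε : ℝ, 0 < ε → ε < 1 → ‖μ K‖ ≤ ε * (4 * ν.real Set.univ + 4) by
    have hlim : Tendsto (fun ε : ℝ => ε * (4 * ν.real Set.univ + 4)) (nhdsWithin 0 (Set.Ioi 0))
        (nhds 0) := by
      have : Continuous fun ε : ℝ => ε * (4 * ν.real Set.univ + 4) := by fun_prop
      simpa using (this.tendsto 0).mono_left nhdsWithin_le_nhds
    refine norm_le_zero_iff.1 (ge_of_tendsto hlim ?_)
    filter_upwards [Ioo_mem_nhdsGT (zero_lt_one (α := ℝ))] with ε hε using H ε hε.1 hε.2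
  intro ε hε hε1
  obtain ⟨v, hv01, hvK, hvint⟩ := exists_cutoff hK ν hε
  obtain ⟨h, hh, hvh⟩ := exists_trigPoly_near
    ⟨fun z => (v z : ℂ), Complex.continuous_ofReal.comp v.continuous⟩ hε
  simp only [ContinuousMap.coe_mk] at hvh
  obtain ⟨M, hM, hbound⟩ := exists_bound_cmInt hμ hh
  -- The second bound on `δ` ensures `M * √δ ≤ ε`.
  set δ : ℝ := min ε ((ε / (M + 1)) ^ 2) with hδ
  have hδpos : 0 < δ := lt_min hε (by positivity)
  obtain ⟨P, hP3, hPK, hPint⟩ := exists_peak_poly hK hK0 hδpos ((min_le_left _ _).trans_lt hε1)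
  have hcP : Continuous fun z : Circle => conj (P.eval (z : ℂ)) :=
    Complex.continuous_conj.comp (Circle.continuous_eval P)
  have hi1 : Integrable (fun z : Circle => h z * conj (P.eval (z : ℂ))) ν :=
    Circle.integrable_of_continuous _ (h.continuous.mul hcP)
  have hi2 : Integrable (K.indicator fun _ => (1 : ℂ)) ν :=
    (integrable_const _).indicator hK.measurableSet
  have hi2' : Integrable (K.indicator fun _ => (1 : ℝ)) ν :=
    (integrable_const _).indicator hK.measurableSet
  have hi3 : Integrable (fun z : Circle => K.indicator (fun _ => (1 : ℂ)) z -
      h z * conj (P.eval (z : ℂ))) ν := hi2.sub hi1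
  have hiv : Integrable (fun z => v z) ν := Circle.integrable_of_continuous _ v.continuous
  have hsplit : μ K = cmInt μ (fun z => K.indicator (fun _ => (1 : ℂ)) z -
      h z * conj (P.eval (z : ℂ))) + cmInt μ (fun z => h z * conj (P.eval (z : ℂ))) := by
    rw [← cmInt_add hi3 hi1, ← cmInt_indicator μ hK.measurableSet]
    simp
  have h1 : ‖cmInt μ (fun z => h z * conj (P.eval (z : ℂ)))‖ ≤ ε := by
    have hs : √(∫ z : Circle, ‖P.eval (z : ℂ)‖ ^ 2 ∂haarT) ≤ ε / (M + 1) :=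
      (Real.sqrt_le_left (by positivity)).2 (hPint.trans (min_le_right _ _))
    calc _ ≤ M * √(∫ z : Circle, ‖P.eval (z : ℂ)‖ ^ 2 ∂haarT) := hbound P
      _ ≤ (M + 1) * (ε / (M + 1)) := by gcongr; linarith
      _ = ε := by field_simp
  have hpt (z : Circle) : ‖K.indicator (fun _ => (1 : ℂ)) z - h z * conj (P.eval (z : ℂ))‖ ≤
      (3 * v z - 3 * K.indicator (fun _ => (1 : ℝ)) z) + 4 * ε := by
    have hvP : ‖((v z : ℂ) - h z) * conj (P.eval (z : ℂ))‖ ≤ ε * 3 := by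
      rw [norm_mul, RCLike.norm_conj]
      gcongr
      exacts [(hvh z).le, hP3 z]
    by_cases hz : z ∈ K
    · have hPz : ‖conj (1 - P.eval (z : ℂ))‖ ≤ ε := by
        rw [RCLike.norm_conj]
        exact (hPK z hz).trans (min_le_left _ _)
      have : (1 : ℂ) - h z * conj (P.eval (z : ℂ)) =
          conj (1 - P.eval (z : ℂ)) + ((v z : ℂ) - h z) * conj (P.eval (z : ℂ)) := by
        rw [hvK z hz, map_sub, map_one]; push_cast; ring
      simp only [hz, Set.indicator_of_mem, hvK z hz]
      rw [this]
      linarith [norm_add_le (conj (1 - P.eval (z : ℂ))) (((v z : ℂ) - h z) * conj (P.eval (z : ℂ)))]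
    · have h3 : ‖(v z : ℂ) * conj (P.eval (z : ℂ))‖ ≤ v z * 3 := by
        rw [norm_mul, RCLike.norm_conj, Complex.norm_of_nonneg (hv01 z).1]
        exact mul_le_mul_of_nonneg_left (hP3 z) (hv01 z).1
      have : (0 : ℂ) - h z * conj (P.eval (z : ℂ)) =
          ((v z : ℂ) - h z) * conj (P.eval (z : ℂ)) - (v z : ℂ) * conj (P.eval (z : ℂ)) := by ring
      simp only [hz, not_false_eq_true, Set.indicator_of_notMem]
      rw [this]
      linarith [norm_sub_le (((v z : ℂ) - h z) * conj (P.eval (z : ℂ)))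
        ((v z : ℂ) * conj (P.eval (z : ℂ)))]
  have hiD : Integrable (fun z => 3 * v z - 3 * K.indicator (fun _ => (1 : ℝ)) z) ν :=
    (hiv.const_mul 3).sub (hi2'.const_mul 3)
  have h2 := (norm_cmInt_le hi3).trans
    (integral_mono hi3.norm (hiD.add (integrable_const (4 * ε))) hpt)
  have h3 : ∫ z, ((3 * v z - 3 * K.indicator (fun _ => (1 : ℝ)) z) + 4 * ε) ∂ν =
      3 * ∫ z, v z ∂ν - 3 * ν.real K + ν.real Set.univ * (4 * ε) := by
    rw [integral_add hiD (integrable_const _),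
      integral_sub (hiv.const_mul 3) (hi2'.const_mul 3), integral_const_mul, integral_const_mul,
      integral_indicator_const _ hK.measurableSet, integral_const]
    simp only [smul_eq_mul, mul_one]
  rw [hsplit]
  refine (norm_add_le _ _).trans ?_
  have h4 := h2.trans_eq h3
  linarith

/-- **Generalized F. and M. Riesz theorem.** If the non-negative Fourier coefficients of a finite
complex Borel measure `μ` on `𝕋` are square-summable, then `μ` is absolutely continuous with
respect to the normalized Lebesgue measure `m`, i.e. `μ(X) = 0` whenever `m(X) = 0`. -/
theorem complexMeasure_absolutelyContinuous_of_memℓp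
    (μ : ComplexMeasure Circle)
    (h : Memℓp (fun n : ℕ => cmFourierCoeff μ (n : ℤ)) 2) :
    ∀ X : Set Circle, MeasurableSet X → haarT X = 0 → μ X = 0 := by
  intro X hX hX0
  have hμ : Summable fun n : ℕ => ‖cmFourierCoeff μ (n : ℤ)‖ ^ 2 := by
    have := h.summable (by norm_num)
    simpa using this
  refine norm_le_zero_iff.1 (le_of_forall_pos_le_add fun ε hε => ?_)
  obtain ⟨K, hKX, hK, hlt⟩ := hX.exists_isCompact_sdiff_lt (measure_ne_top (cmDom μ) X)
    (ε := ENNReal.ofReal ε) (by simpa using hε)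
  have hXK : MeasurableSet (X \ K) := hX.diff hK.measurableSet
  have hμK : μ K = 0 :=
    apply_eq_zero_of_isClosed hμ hK.isClosed (measure_mono_null hKX hX0)
  have hdiff : μ X = cmInt μ ((X \ K).indicator fun _ => 1) := by
    rw [cmInt_indicator μ hXK, ← VectorMeasure.of_add_of_sdiff hK.measurableSet hX hKX, hμK,
      zero_add]
  rw [hdiff, zero_add]
  calc _ ≤ ∫ z, ‖(X \ K).indicator (fun _ => (1 : ℂ)) z‖ ∂(cmDom μ) :=
        norm_cmInt_le ((integrable_const _).indicator hXK)
    _ = (cmDom μ).real (X \ K) := by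
        simp only [norm_indicator_eq_indicator_norm, norm_one]
        rw [integral_indicator_const _ hXK, smul_eq_mul, mul_one]
    _ ≤ ε := ENNReal.toReal_le_of_le_ofReal hε.le hlt.le
end
end
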